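/- arXiv:1910.12666 — 4 statements merged into one kernel-verified Lean document; each statement's English description precedes it below -/
import Mathlib

section
/- Let θ ∈ (0, π/2) and let |ψ(θ)⟩ = cos θ·|000⟩ + sin θ·|111⟩ be the generalized GHZ state. Let Alice measure X₀ = σx, X₁ = σy and Bob measure Y₀ = (σx+σz)/√2, Y₁ = (σy+σz)/√2. Then the assemblage of Charlie's unnormalized conditional states σ^C_{a,b|X_x,Y_y} = Tr_{AB}[(Π_{a|X_x} ⊗ Π_{b|Y_y} ⊗ I₂) |ψ(θ)⟩⟨ψ(θ)|] admits no local-hidden-state (LHS) model. -/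
open Matrix Complex
open scoped Matrix Kronecker ComplexOrder

noncomputable section
namespace Paper

/-- Pauli X. -/
def sx : Matrix (Fin 2) (Fin 2) ℂ := !![0, 1; 1, 0]
/-- Pauli Y. -/
def sy : Matrix (Fin 2) (Fin 2) ℂ := !![0, -Complex.I; Complex.I, 0]
/-- Pauli Z. -/
def sz : Matrix (Fin 2) (Fin 2) ℂ := !![1, 0; 0, -1]

/-- Projector onto outcome `a ∈ {0,1}` of a dichotomic observable `O`:
`Π₀ = (I+O)/2`, `Π₁ = (I−O)/2`. -/
def Proj {d : ℕ} (a : Fin 2) (O : Matrix (Fin d) (Fin d) ℂ) : Matrix (Fin d) (Fin d) ℂ :=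
  (2 : ℂ)⁻¹ • (1 + if a = 0 then O else -O)

/-- Outer product `|ψ⟩⟨ψ|`. -/
def outer {n : Type*} (ψ : n → ℂ) : Matrix n n ℂ :=
  Matrix.of fun i j => ψ i * star (ψ j)

/-- `ψ` is a unit vector. -/
def UnitVec {n : Type*} [Fintype n] (ψ : n → ℂ) : Prop := ∑ i, star (ψ i) * ψ i = 1

/-- Hermitian observable with eigenvalues `±1`. -/
def Dichotomic {d : ℕ} (O : Matrix (Fin d) (Fin d) ℂ) : Prop := O.IsHermitian ∧ O * O = 1

/-- Partial trace over the first two tensor factors. -/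
def trAB {dA dB : ℕ} (M : Matrix (Fin dA × Fin dB × Fin 2) (Fin dA × Fin dB × Fin 2) ℂ) :
    Matrix (Fin 2) (Fin 2) ℂ :=
  Matrix.of fun i j => ∑ k : Fin dA, ∑ l : Fin dB, M (k, l, i) (k, l, j)

/-- Unnormalized conditional state on Charlie's qubit:
`σ^C_{a,b|X,Y} = Tr_{AB}[(Π_{a|X} ⊗ Π_{b|Y} ⊗ I₂) ρ]`. -/
def condState {dA dB : ℕ} (ρ : Matrix (Fin dA × Fin dB × Fin 2) (Fin dA × Fin dB × Fin 2) ℂ)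
    (X : Matrix (Fin dA) (Fin dA) ℂ) (Y : Matrix (Fin dB) (Fin dB) ℂ) (a b : Fin 2) :
    Matrix (Fin 2) (Fin 2) ℂ :=
  trAB ((Proj a X ⊗ₖ (Proj b Y ⊗ₖ (1 : Matrix (Fin 2) (Fin 2) ℂ))) * ρ)

/-- Conditional probability `P(c_Z | ·) = Tr[Π_{c|Z} σ] / Tr[σ]`. -/
def condProb (Z σ : Matrix (Fin 2) (Fin 2) ℂ) (c : Fin 2) : ℝ :=
  ((Proj c Z * σ).trace).re / (σ.trace).re

/-- The fine-grained steering expression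
`CP = P(0_{Z₀}|1_{X₀}1_{Y₀}) + P(0_{Z₀}|0_{X₁}1_{Y₁}) + P(0_{Z₁}|0_{X₀}1_{Y₁}) + P(0_{Z₁}|0_{X₁}1_{Y₀})`
with `Z₀ = σx`, `Z₁ = σy`. -/
def CP {dA dB : ℕ} (ρ : Matrix (Fin dA × Fin dB × Fin 2) (Fin dA × Fin dB × Fin 2) ℂ)
    (X0 X1 : Matrix (Fin dA) (Fin dA) ℂ) (Y0 Y1 : Matrix (Fin dB) (Fin dB) ℂ) : ℝ :=
  condProb sx (condState ρ X0 Y0 1 1) 0 + condProb sx (condState ρ X1 Y1 0 1) 0 +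
  condProb sy (condState ρ X0 Y1 0 1) 0 + condProb sy (condState ρ X1 Y0 0 1) 0

/-- The four conditioning events in `CP` have positive probability. -/
def PosEvents {dA dB : ℕ} (ρ : Matrix (Fin dA × Fin dB × Fin 2) (Fin dA × Fin dB × Fin 2) ℂ)
    (X0 X1 : Matrix (Fin dA) (Fin dA) ℂ) (Y0 Y1 : Matrix (Fin dB) (Fin dB) ℂ) : Prop :=
  0 < ((condState ρ X0 Y0 1 1).trace).re ∧ 0 < ((condState ρ X1 Y1 0 1).trace).re ∧
  0 < ((condState ρ X0 Y1 0 1).trace).re ∧ 0 < ((condState ρ X1 Y0 0 1).trace).re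

/-- Product across the bipartition `A|BC`. -/
def BisepA {dA dB : ℕ} (ψ : Fin dA × Fin dB × Fin 2 → ℂ) : Prop :=
  ∃ (u : Fin dA → ℂ) (v : Fin dB × Fin 2 → ℂ), ∀ i j k, ψ (i, j, k) = u i * v (j, k)

/-- Product across the bipartition `B|AC`. -/
def BisepB {dA dB : ℕ} (ψ : Fin dA × Fin dB × Fin 2 → ℂ) : Prop :=
  ∃ (u : Fin dB → ℂ) (v : Fin dA × Fin 2 → ℂ), ∀ i j k, ψ (i, j, k) = u j * v (i, k)

/-- Product across the bipartition `C|AB`. -/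
def BisepC {dA dB : ℕ} (ψ : Fin dA × Fin dB × Fin 2 → ℂ) : Prop :=
  ∃ (u : Fin 2 → ℂ) (v : Fin dA × Fin dB → ℂ), ∀ i j k, ψ (i, j, k) = v (i, j) * u k

/-- Genuine multipartite entanglement: not a product across any bipartition. -/
def GenEnt {dA dB : ℕ} (ψ : Fin dA × Fin dB × Fin 2 → ℂ) : Prop :=
  ¬ BisepA ψ ∧ ¬ BisepB ψ ∧ ¬ BisepC ψ


/-- Alice's observables `X₀ = σx`, `X₁ = σy`. -/
def XA : Fin 2 → Matrix (Fin 2) (Fin 2) ℂ := fun x => if x = 0 then sx else sy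

/-- Bob's observables `Y₀ = (σx+σz)/√2`, `Y₁ = (σy+σz)/√2`. -/
def YB : Fin 2 → Matrix (Fin 2) (Fin 2) ℂ := fun y =>
  if y = 0 then (Real.sqrt 2 : ℂ)⁻¹ • (sx + sz) else (Real.sqrt 2 : ℂ)⁻¹ • (sy + sz)

/-- The generalized GHZ state `cos θ·|000⟩ + sin θ·|111⟩`. -/
def ggHZ (θ : ℝ) : Fin 2 × Fin 2 × Fin 2 → ℂ := fun i =>
  if i = (0, 0, 0) then (Real.cos θ : ℂ) else if i = (1, 1, 1) then (Real.sin θ : ℂ) else 0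

/-- A local-hidden-state (LHS) model for an assemblage `σa a b x y` of 2×2 matrices. -/
def HasLHS (σa : Fin 2 → Fin 2 → Fin 2 → Fin 2 → Matrix (Fin 2) (Fin 2) ℂ) : Prop :=
  ∃ (n : ℕ) (p : Fin n → ℝ) (ρh : Fin n → Matrix (Fin 2) (Fin 2) ℂ)
    (PA PB : Fin 2 → Fin 2 → Fin n → ℝ),
    (∀ l, 0 ≤ p l) ∧ (∑ l, p l) = 1 ∧
    (∀ l, (ρh l).PosSemidef ∧ (ρh l).trace = 1) ∧
    (∀ a x l, 0 ≤ PA a x l ∧ PA a x l ≤ 1) ∧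
    (∀ b y l, 0 ≤ PB b y l ∧ PB b y l ≤ 1) ∧
    (∀ x l, ∑ a, PA a x l = 1) ∧ (∀ y l, ∑ b, PB b y l = 1) ∧
    (∀ a b x y, σa a b x y = ∑ l, ((p l * PA a x l * PB b y l : ℝ) : ℂ) • ρh l)

/-!
In an LHS model, pick a hidden state `ρ` of positive weight and, for every setting, an outcome which
`ρ` produces with positive probability. As the terms of the model are positive semidefinite, the
kernel of each conditional state so selected is contained in the kernel of `ρ`.

Let `A` be the projector of Alice's selected outcome for an observable not commuting with `σz`. It
has rank one and no zero entry, so that on the GHZ state her measurement only rescales the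
amplitudes: Charlie's conditional state is `L Pᵀ R`, where `P` is the projector of Bob's outcome and
`L`, `R` are invertible diagonal matrices which do not depend on Bob's setting. The inclusion of
kernels then says that `P` fixes `(ρ R⁻¹)ᵀ`. This holds for both settings of Bob, but two
noncommuting Hermitian projectors of a qubit have no common fixed vector, whence `ρ = 0`.
-/

section LinearAlgebra

variable {l m n ι : Type*}

lemma mulVec_eq_zero_of_sum_mulVec_eq_zero {𝕜 : Type*} [RCLike 𝕜] [Fintype n] {s : Finset ι}
    {M : ι → Matrix n n 𝕜} (hM : ∀ i ∈ s, (M i).PosSemidef) {v : n → 𝕜}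
    (h : (∑ i ∈ s, M i) *ᵥ v = 0) {i : ι} (hi : i ∈ s) : M i *ᵥ v = 0 := by
  have hsum : ∑ j ∈ s, star v ⬝ᵥ (M j *ᵥ v) = 0 := by
    rw [← dotProduct_sum, ← Matrix.sum_mulVec, h, dotProduct_zero]
  rw [← (hM i hi).dotProduct_mulVec_zero_iff]
  exact (Finset.sum_eq_zero_iff_of_nonneg
    fun j hj => (hM j hj).dotProduct_mulVec_nonneg v).1 hsum i hi

lemma mul_eq_self_of_mulVec_eq_zero_imp {R : Type*} [Ring R] [Fintype n] {σ : Matrix l n R}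
    {ρ : Matrix m n R} (h : ∀ v, σ *ᵥ v = 0 → ρ *ᵥ v = 0) {E : Matrix n n R} (hE : σ * E = σ) :
    ρ * E = ρ := by
  refine Matrix.ext_iff_mulVec.2 fun v => ?_
  have hker : σ *ᵥ (E *ᵥ v - v) = 0 := by
    rw [mulVec_sub, mulVec_mulVec, hE, sub_self]
  simpa only [mulVec_sub, mulVec_mulVec, sub_eq_zero] using h _ hker

lemma mul_inv_mul_eq_mul_inv {R : Type*} [CommRing R] [Fintype n] [DecidableEq n]
    {L : Matrix l n R} {P S : Matrix n n R} {ρ : Matrix m n R} (hP : IsIdempotentElem P)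
    (hS : IsUnit S.det) (h : ∀ v, (L * P * S) *ᵥ v = 0 → ρ *ᵥ v = 0) :
    ρ * S⁻¹ * P = ρ * S⁻¹ := by
  have hfix : L * P * S * (S⁻¹ * P * S) = L * P * S := by
    simp only [Matrix.mul_assoc, mul_nonsing_inv_cancel_left S _ hS]
    rw [← Matrix.mul_assoc P P, hP.eq]
  have hρ : ρ * (S⁻¹ * P * S) = ρ := mul_eq_self_of_mulVec_eq_zero_imp h hfix
  calc ρ * S⁻¹ * P = ρ * (S⁻¹ * P * S) * S⁻¹ := by
        simp only [Matrix.mul_assoc, mul_nonsing_inv S hS, Matrix.mul_one]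
    _ = ρ * S⁻¹ := by rw [hρ]

lemma isIdempotentElem_transpose {R : Type*} [CommSemiring R] [Fintype n] {P : Matrix n n R}
    (hP : IsIdempotentElem P) : IsIdempotentElem Pᵀ := by
  rw [IsIdempotentElem, ← transpose_mul, hP.eq]

lemma det_eq_zero_of_isIdempotentElem {R : Type*} [Field R] [Fintype n] [DecidableEq n]
    {P : Matrix n n R} (hP : IsIdempotentElem P) (h1 : P ≠ 1) : P.det = 0 := by
  by_contra hdet
  have hunit : IsUnit P := (isUnit_iff_isUnit_det P).2 (Ne.isUnit hdet)
  exact h1 ((IsIdempotentElem.iff_eq_one_of_isUnit hunit).1 hP)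

lemma mul_self_eq_neg_det_smul_one {R : Type*} [CommRing R] {K : Matrix (Fin 2) (Fin 2) R}
    (hK : K.trace = 0) : K * K = -K.det • 1 := by
  have h11 : K 1 1 = -K 0 0 := by
    rw [trace_fin_two] at hK
    exact eq_neg_of_add_eq_zero_right hK
  ext i j
  fin_cases i <;> fin_cases j <;> simp [mul_apply, det_fin_two, h11] <;> ring

/-- The commutator is skew-Hermitian and traceless, so if it were singular its square, which is
`-Kᴴ * K`, would vanish. -/
lemma det_commutator_ne_zero {𝕜 : Type*} [RCLike 𝕜] {P Q : Matrix (Fin 2) (Fin 2) 𝕜}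
    (hP : P.IsHermitian) (hQ : Q.IsHermitian) (hPQ : ¬ Commute P Q) : (P * Q - Q * P).det ≠ 0 := by
  intro hdet
  set K := P * Q - Q * P with hK
  have hskew : Kᴴ = -K := by
    rw [hK, conjTranspose_sub, conjTranspose_mul, conjTranspose_mul, hP.eq, hQ.eq, neg_sub]
  have htrace : K.trace = 0 := by
    rw [hK, trace_sub, trace_mul_comm, sub_self]
  have hzero : Kᴴ * K = 0 := by
    rw [hskew, neg_mul, mul_self_eq_neg_det_smul_one htrace, hdet, neg_zero, zero_smul,
      neg_zero]
  exact hPQ (sub_eq_zero.1 (conjTranspose_mul_self_eq_zero.1 hzero))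

lemma eq_zero_of_mul_eq_self_of_not_commute {𝕜 : Type*} [RCLike 𝕜]
    {P Q : Matrix (Fin 2) (Fin 2) 𝕜} (hP : P.IsHermitian) (hQ : Q.IsHermitian) (hPQ : ¬ Commute P Q)
    {N : Matrix (Fin 2) n 𝕜} (hPN : P * N = N) (hQN : Q * N = N) : N = 0 := by
  have hcomm : (P * Q - Q * P) * N = 0 := by
    rw [Matrix.sub_mul, Matrix.mul_assoc, Matrix.mul_assoc, hPN, hQN, hPN, sub_self]
  have hunit : IsUnit (P * Q - Q * P).det := (det_commutator_ne_zero hP hQ hPQ).isUnit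
  rw [← nonsing_inv_mul_cancel_left (P * Q - Q * P) N hunit, hcomm, Matrix.mul_zero]

lemma hadamard_eq_diagonal_mul_mul_diagonal {K : Type*} [Field K] {A : Matrix (Fin 2) (Fin 2) K}
    (hdet : A.det = 0) (h00 : A 0 0 ≠ 0) (B : Matrix (Fin 2) (Fin 2) K) :
    A ⊙ B = diagonal (A · 0) * B * diagonal (A 0 · / A 0 0) := by
  have hrank : ∀ i j, A i j = A i 0 * (A 0 j / A 0 0) := by
    rw [det_fin_two] at hdet
    intro i j
    fin_cases i <;> fin_cases j <;> simp only [Fin.zero_eta, Fin.mk_one] <;> field_simp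
    linear_combination hdet
  ext i j
  rw [hadamard_apply, mul_diagonal, diagonal_mul, hrank i j]
  ring

end LinearAlgebra

section Projectors

variable {d : ℕ} {X Y : Matrix (Fin d) (Fin d) ℂ}

lemma isHermitian_proj (hX : X.IsHermitian) (a : Fin 2) : (Proj a X).IsHermitian := by
  have h2 : IsSelfAdjoint (2 : ℂ)⁻¹ := by simp [IsSelfAdjoint]
  unfold Proj
  split_ifs
  · exact IsSelfAdjoint.smul h2 (isHermitian_one.add hX)
  · exact IsSelfAdjoint.smul h2 (isHermitian_one.add hX.neg)

lemma isIdempotentElem_proj (hX : X * X = 1) (a : Fin 2) : IsIdempotentElem (Proj a X) := by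
  have hsq : (if a = 0 then X else -X) * (if a = 0 then X else -X) = 1 := by
    split_ifs <;> simp [hX]
  unfold IsIdempotentElem Proj
  rw [smul_mul_smul_comm, add_mul, mul_add, mul_add, hsq, one_mul, one_mul, mul_one]
  module

lemma commute_proj_right_iff (a : Fin 2) : Commute Y (Proj a X) ↔ Commute Y X := by
  have hshift : ∀ Z : Matrix (Fin d) (Fin d) ℂ, Commute Y (1 + Z) ↔ Commute Y Z := fun Z =>
    ⟨fun h => by simpa only [add_sub_cancel_left] using h.sub_right (Commute.one_right Y),
      fun h => (Commute.one_right Y).add_right h⟩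
  unfold Proj
  rw [Commute.smul_right_iff₀ (by norm_num), hshift]
  split_ifs
  · rfl
  · exact Commute.neg_right_iff

lemma commute_proj_proj_iff (a b : Fin 2) : Commute (Proj a X) (Proj b Y) ↔ Commute X Y := by
  rw [commute_proj_right_iff, Commute.symm_iff, commute_proj_right_iff, Commute.symm_iff]

lemma commute_sz_iff {A : Matrix (Fin 2) (Fin 2) ℂ} :
    Commute sz A ↔ A 0 1 = 0 ∧ A 1 0 = 0 := by
  rw [Commute, SemiconjBy, ← Matrix.ext_iff]
  simp [sz, Matrix.mul_apply, Fin.forall_fin_two, Fin.sum_univ_two, -cons_mul, self_eq_neg,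
    neg_eq_self]

lemma det_eq_zero_of_not_commute_sz {A : Matrix (Fin 2) (Fin 2) ℂ} (hA : IsIdempotentElem A)
    (hz : ¬ Commute sz A) : A.det = 0 :=
  det_eq_zero_of_isIdempotentElem hA fun h => hz (h ▸ Commute.one_right sz)

lemma apply_zero_ne_zero_of_not_commute_sz {A : Matrix (Fin 2) (Fin 2) ℂ} (hA : A.IsHermitian)
    (hdet : A.det = 0) (hz : ¬ Commute sz A) (i : Fin 2) : A i 0 ≠ 0 := by
  have h10 : A 1 0 ≠ 0 := fun h => hz (commute_sz_iff.2 ⟨by rw [← hA.apply, h, star_zero], h⟩)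
  have h01 : A 0 1 ≠ 0 := by rwa [← hA.apply, star_ne_zero]
  have h00 : A 0 0 ≠ 0 := by
    intro h
    rw [det_fin_two, h, zero_mul, zero_sub, neg_eq_zero] at hdet
    exact mul_ne_zero h01 h10 hdet
  fin_cases i
  · exact h00
  · exact h10

end Projectors

section GHZ

/-- The amplitudes `(cos θ, sin θ)` of the generalized GHZ state on `|000⟩` and `|111⟩`. -/
def ghzAmp (θ : ℝ) : Fin 2 → ℂ := ![(Real.cos θ : ℂ), (Real.sin θ : ℂ)]

lemma ghzAmp_ne_zero {θ : ℝ} (hθ : Real.sin (2 * θ) ≠ 0) (i : Fin 2) : ghzAmp θ i ≠ 0 := by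
  rw [Real.sin_two_mul] at hθ
  fin_cases i
  · exact ofReal_ne_zero.2 (right_ne_zero_of_mul hθ)
  · exact ofReal_ne_zero.2 (right_ne_zero_of_mul (left_ne_zero_of_mul hθ))

lemma ggHZ_apply (θ : ℝ) (i j k : Fin 2) :
    ggHZ θ (i, j, k) = if i = k ∧ j = k then ghzAmp θ k else 0 := by
  fin_cases i <;> fin_cases j <;> fin_cases k <;> simp [ggHZ, ghzAmp]

lemma condState_outer_ggHZ (θ : ℝ) (X Y : Matrix (Fin 2) (Fin 2) ℂ) (a b : Fin 2) :
    condState (outer (ggHZ θ)) X Y a b =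
      diagonal (ghzAmp θ) * (Proj a X ⊙ Proj b Y)ᵀ * diagonal (star (ghzAmp θ)) := by
  ext i j
  simp only [condState, trAB, outer, of_apply, mul_apply, kroneckerMap_apply, one_apply,
    Fintype.sum_prod_type, ggHZ_apply, transpose_apply, hadamard_apply]
  fin_cases i <;> fin_cases j <;> simp [Fin.sum_univ_two] <;> ring

lemma condState_outer_ggHZ_of_det_eq_zero (θ : ℝ) {X : Matrix (Fin 2) (Fin 2) ℂ} {a : Fin 2}
    (hdet : (Proj a X).det = 0) (h00 : Proj a X 0 0 ≠ 0) (Y : Matrix (Fin 2) (Fin 2) ℂ)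
    (b : Fin 2) :
    condState (outer (ggHZ θ)) X Y a b =
      diagonal (fun i => ghzAmp θ i * (Proj a X 0 i / Proj a X 0 0)) * (Proj b Y)ᵀ *
        diagonal (fun j => Proj a X j 0 * star (ghzAmp θ j)) := by
  rw [condState_outer_ggHZ, hadamard_eq_diagonal_mul_mul_diagonal hdet h00, transpose_mul,
    transpose_mul, diagonal_transpose, diagonal_transpose, ← diagonal_mul_diagonal,
    ← diagonal_mul_diagonal]
  simp only [Matrix.mul_assoc]
  rfl

end GHZ

lemma exists_pos_of_sum_eq_one {ι : Type*} [Fintype ι] {f : ι → ℝ} (h : ∑ i, f i = 1) :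
    ∃ i, 0 < f i := by
  simpa using Finset.exists_lt_of_sum_lt (s := Finset.univ) (f := 0) (g := f) (by simp [h])

lemma HasLHS.exists_mulVec_eq_zero {σ : Fin 2 → Fin 2 → Fin 2 → Fin 2 → Matrix (Fin 2) (Fin 2) ℂ}
    (h : HasLHS σ) : ∃ (ρ : Matrix (Fin 2) (Fin 2) ℂ) (a b : Fin 2 → Fin 2),
      ρ.PosSemidef ∧ ρ.trace = 1 ∧ ∀ x y v, σ (a x) (b y) x y *ᵥ v = 0 → ρ *ᵥ v = 0 := by
  obtain ⟨n, p, ρ, PA, PB, hp, hp1, hρ, hPA, hPB, hA, hB, hσ⟩ := h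
  obtain ⟨l, hl⟩ := exists_pos_of_sum_eq_one hp1
  choose a ha using fun x => exists_pos_of_sum_eq_one (hA x l)
  choose b hb using fun y => exists_pos_of_sum_eq_one (hB y l)
  refine ⟨ρ l, a, b, (hρ l).1, (hρ l).2, fun x y v hv => ?_⟩
  have hterm : ∀ k ∈ Finset.univ,
      (((p k * PA (a x) x k * PB (b y) y k : ℝ) : ℂ) • ρ k).PosSemidef := fun k _ =>
    (hρ k).1.smul (zero_le_real.2
      (mul_nonneg (mul_nonneg (hp k) (hPA _ _ k).1) (hPB _ _ k).1))
  rw [hσ] at hv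
  have hlv := mulVec_eq_zero_of_sum_mulVec_eq_zero hterm hv (Finset.mem_univ l)
  rw [smul_mulVec] at hlv
  exact (smul_eq_zero.1 hlv).resolve_left
    (ofReal_ne_zero.2 (mul_pos (mul_pos hl (ha x)) (hb y)).ne')

section Observables

lemma ofReal_sqrt_two_inv_mul_self : (Real.sqrt 2 : ℂ)⁻¹ * (Real.sqrt 2 : ℂ)⁻¹ = 2⁻¹ := by
  rw [← mul_inv, ← ofReal_mul, Real.mul_self_sqrt (by norm_num), ofReal_ofNat]

lemma dichotomic_sx : Dichotomic sx := by
  constructor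
  · ext i j
    fin_cases i <;> fin_cases j <;> simp [sx]
  · simp [sx, one_fin_two]

lemma dichotomic_sy : Dichotomic sy := by
  constructor
  · ext i j
    fin_cases i <;> fin_cases j <;> simp [sy]
  · simp [sy, one_fin_two]

lemma dichotomic_sz : Dichotomic sz := by
  constructor
  · ext i j
    fin_cases i <;> fin_cases j <;> simp [sz]
  · simp [sz, one_fin_two]

lemma sx_mul_sz_add_sz_mul_sx : sx * sz + sz * sx = 0 := by
  ext i j
  fin_cases i <;> fin_cases j <;> simp [sx, sz]

lemma sy_mul_sz_add_sz_mul_sy : sy * sz + sz * sy = 0 := by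
  ext i j
  fin_cases i <;> fin_cases j <;> simp [sy, sz]

lemma dichotomic_sqrt_two_inv_smul_add {d : ℕ} {O O' : Matrix (Fin d) (Fin d) ℂ} (hO : Dichotomic O)
    (hO' : Dichotomic O') (h : O * O' + O' * O = 0) :
    Dichotomic ((Real.sqrt 2 : ℂ)⁻¹ • (O + O')) := by
  constructor
  · exact IsSelfAdjoint.smul (by simp [IsSelfAdjoint]) (hO.1.add hO'.1)
  · have hsq : (O + O') * (O + O') = (2 : ℂ) • 1 := by
      calc (O + O') * (O + O') = O * O + (O * O' + O' * O) + O' * O' := by noncomm_ring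
        _ = (2 : ℂ) • 1 := by rw [hO.2, h, hO'.2, add_zero, two_smul]
    rw [smul_mul_smul_comm, ofReal_sqrt_two_inv_mul_self, hsq, inv_smul_smul₀ two_ne_zero]

lemma dichotomic_YB (y : Fin 2) : Dichotomic (YB y) := by
  unfold YB
  split_ifs
  · exact dichotomic_sqrt_two_inv_smul_add dichotomic_sx dichotomic_sz sx_mul_sz_add_sz_mul_sx
  · exact dichotomic_sqrt_two_inv_smul_add dichotomic_sy dichotomic_sz sy_mul_sz_add_sz_mul_sy

lemma not_commute_sz_sx : ¬ Commute sz sx := by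
  simp [commute_sz_iff, sx]

lemma not_commute_YB : ¬ Commute (YB 0) (YB 1) := by
  have h2 : (Real.sqrt 2 : ℂ)⁻¹ ≠ 0 := inv_ne_zero (ofReal_ne_zero.2 (by norm_num))
  have hpauli : ¬ Commute (sx + sz) (sy + sz) := fun h => by
    have him := congrArg Complex.im (congrFun (congrFun h.eq 0) 0)
    norm_num [sx, sy, sz] at him
  change ¬ Commute ((Real.sqrt 2 : ℂ)⁻¹ • (sx + sz)) ((Real.sqrt 2 : ℂ)⁻¹ • (sy + sz))
  rwa [Commute.smul_left_iff₀ h2, Commute.smul_right_iff₀ h2]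

end Observables

theorem stmt4_general {θ : ℝ} (hθ : Real.sin (2 * θ) ≠ 0)
    {X Y : Fin 2 → Matrix (Fin 2) (Fin 2) ℂ} {x : Fin 2} (hX : Dichotomic (X x))
    (hXz : ¬ Commute sz (X x)) (hY : ∀ y, Dichotomic (Y y)) (hYc : ¬ Commute (Y 0) (Y 1)) :
    ¬ HasLHS (fun a b x y => condState (outer (ggHZ θ)) (X x) (Y y) a b) := by
  intro h
  obtain ⟨ρ, a, b, -, htr, hker⟩ := h.exists_mulVec_eq_zero
  set A := Proj (a x) (X x)
  have hAz : ¬ Commute sz A := mt (commute_proj_right_iff _).1 hXz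
  have hdet : A.det = 0 := det_eq_zero_of_not_commute_sz (isIdempotentElem_proj hX.2 _) hAz
  have hcol : ∀ i, A i 0 ≠ 0 :=
    apply_zero_ne_zero_of_not_commute_sz (isHermitian_proj hX.1 _) hdet hAz
  set S := diagonal (fun j => A j 0 * star (ghzAmp θ j)) with hS
  have hSdet : IsUnit S.det := by
    rw [hS, det_diagonal, isUnit_iff_ne_zero]
    exact Finset.prod_ne_zero_iff.2 fun j _ =>
      mul_ne_zero (hcol j) (star_ne_zero.2 (ghzAmp_ne_zero hθ j))
  have hfix : ∀ y, Proj (b y) (Y y) * (ρ * S⁻¹)ᵀ = (ρ * S⁻¹)ᵀ := fun y => by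
    have hP := isIdempotentElem_transpose (isIdempotentElem_proj (hY y).2 (b y))
    have hρ := mul_inv_mul_eq_mul_inv hP hSdet fun v hv =>
      hker x y v (by rwa [condState_outer_ggHZ_of_det_eq_zero θ hdet (hcol 0)])
    simpa only [transpose_mul _ (Proj _ _)ᵀ, transpose_transpose] using congrArg transpose hρ
  have hzero : (ρ * S⁻¹)ᵀ = 0 := eq_zero_of_mul_eq_self_of_not_commute
    (isHermitian_proj (hY 0).1 _) (isHermitian_proj (hY 1).1 _)
    (mt (commute_proj_proj_iff _ _).1 hYc) (hfix 0) (hfix 1)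
  have hρ0 : ρ = 0 := by
    rw [← nonsing_inv_mul_cancel_right S ρ hSdet, transpose_eq_zero.1 hzero, Matrix.zero_mul]
  simp [hρ0] at htr

/-- the assemblage prepared on Charlie's qubit from the generalized GHZ state by
Alice's measurements `σx, σy` and Bob's measurements `(σx+σz)/√2, (σy+σz)/√2` admits no LHS
model. -/
theorem stmt4 (θ : ℝ) (hθ : 0 < θ) (hθ' : θ < Real.pi / 2) :
    ¬ HasLHS (fun a b x y => condState (outer (ggHZ θ)) (XA x) (YB y) a b) := by
  have hsin : Real.sin (2 * θ) ≠ 0 :=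
    (Real.sin_pos_of_pos_of_lt_pi (by linarith) (by linarith)).ne'
  exact stmt4_general (x := 0) hsin dichotomic_sx not_commute_sz_sx dichotomic_YB not_commute_YB

end Paper
end
end

section
/- Let c₀, c₁ > 0 with c₀² + c₁² < 1 and let |ψ_W⟩ = c₀|001⟩ + c₁|010⟩ + √(1−c₀²−c₁²)|100⟩ be a pure W-class state. Let Alice measure X₀ = σx, X₁ = σy, and define the unnormalized conditional states on the Bob–Charlie pair σ^{BC}_{a|X_x} = Tr_A[(Π_{a|X_x} ⊗ I₄) |ψ_W⟩⟨ψ_W|] (partial trace over the first qubit). Then there exist no n ∈ ℕ, weights p : Fin n → ℝ with p(λ) ≥ 0 and Σ_λ p(λ) = 1, two-qubit density matrices ρ^{BC}_λ (4×4 positive semidefinite, trace 1), and numbers P_A(a|x,λ) ∈ [0,1] with Σ_a P_A(a|x,λ) = 1, such that σ^{BC}_{a|X_x} = Σ_λ p(λ)·P_A(a|x,λ)·ρ^{BC}_λ for all a, x ∈ {0,1}. -/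
open Matrix Complex
open scoped Matrix Kronecker ComplexOrder

noncomputable section
namespace Paper

/-- Partial trace over the first qubit of a three-qubit matrix. -/
def trA3 (M : Matrix (Fin 2 × Fin 2 × Fin 2) (Fin 2 × Fin 2 × Fin 2) ℂ) :
    Matrix (Fin 2 × Fin 2) (Fin 2 × Fin 2) ℂ :=
  Matrix.of fun i j => ∑ k : Fin 2, M (k, i.1, i.2) (k, j.1, j.2)

/-- Unnormalized conditional state on the Bob–Charlie pair:
`σ^{BC}_{a|X} = Tr_A[(Π_{a|X} ⊗ I₄) ρ]`. -/
def condStateBC (ρ : Matrix (Fin 2 × Fin 2 × Fin 2) (Fin 2 × Fin 2 × Fin 2) ℂ)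
    (X : Matrix (Fin 2) (Fin 2) ℂ) (a : Fin 2) : Matrix (Fin 2 × Fin 2) (Fin 2 × Fin 2) ℂ :=
  trA3 ((Proj a X ⊗ₖ (1 : Matrix (Fin 2 × Fin 2) (Fin 2 × Fin 2) ℂ)) * ρ)

/-- The pure W-class state `c₀|001⟩ + c₁|010⟩ + √(1−c₀²−c₁²)|100⟩`. -/
def wState (c0 c1 : ℝ) : Fin 2 × Fin 2 × Fin 2 → ℂ := fun i =>
  if i = (0, 0, 1) then (c0 : ℂ) else if i = (0, 1, 0) then (c1 : ℂ)
  else if i = (1, 0, 0) then (Real.sqrt (1 - c0 ^ 2 - c1 ^ 2) : ℂ) else 0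

/-
Write `M` for the coefficient matrix of `ψ` across the cut `A|BC`, so that `σ_{a|X} = M Π_{a|X}ᵀ
Mᴴ`. In a local-hidden-state model every hidden state `ρ` of positive weight is compatible, for
each of the two settings, with some outcome `a`, hence is killed by the kernel of `σ_{a|X}`. If
`ψ` is entangled across the cut, `M` is injective, and these kernel inclusions make the rows of
`W = ρ M (Mᴴ M)⁻¹` common left eigenvectors of Alice's two transposed observables. Noncommuting
Hermitian 2 × 2 matrices have no common eigenvector: their commutator is skew-Hermitian and
traceless, so it is zero as soon as it is singular. Hence `W = 0`, so `ρ = W Mᴴ = 0`,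
contradicting `tr ρ = 1`.
-/

section LinearAlgebra

variable {𝕜 : Type*} [RCLike 𝕜] {m n κ : Type*} [Fintype n]

lemma mul_eq_zero_of_ker_mulVecLin_le {R l : Type*} [CommSemiring R] {A : Matrix m n R}
    {B : Matrix l n R} (h : A.mulVecLin.ker ≤ B.mulVecLin.ker) {N : Matrix n κ R}
    (hN : A * N = 0) : B * N = 0 := by
  ext i k
  have hk : A *ᵥ N.col k = 0 := funext fun j => congrFun₂ hN j k
  exact congrFun (h hk) i

section KernelOfTripleProduct

variable {R l : Type*} [CommRing R] [Fintype m] [DecidableEq n] {ρ : Matrix l m R}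
  {A : Matrix m n R} {P : Matrix n n R} {B : Matrix n m R} {S : Matrix m n R}

lemma mul_mul_idempotent_eq_of_ker_le (hS : B * S = 1) (hP : P * P = P)
    (h : (A * P * B).mulVecLin.ker ≤ ρ.mulVecLin.ker) : ρ * S * P = ρ * S := by
  have hker : A * P * B * (S * (1 - P)) = 0 := by
    rw [Matrix.mul_assoc, ← Matrix.mul_assoc B, hS, Matrix.one_mul, Matrix.mul_assoc,
      Matrix.mul_sub, Matrix.mul_one, hP, sub_self, Matrix.mul_zero]
  have hρ := mul_eq_zero_of_ker_mulVecLin_le h hker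
  rw [← Matrix.mul_assoc, Matrix.mul_sub, Matrix.mul_one] at hρ
  exact (sub_eq_zero.1 hρ).symm

lemma mul_rightInverse_mul_eq_self_of_ker_le (hS : B * S = 1)
    (h : (A * P * B).mulVecLin.ker ≤ ρ.mulVecLin.ker) : ρ * S * B = ρ := by
  classical
  have hker : A * P * B * (1 - S * B) = 0 := by
    rw [Matrix.mul_assoc, Matrix.mul_sub, Matrix.mul_one, ← Matrix.mul_assoc B, hS,
      Matrix.one_mul, sub_self, Matrix.mul_zero]
  have hρ := mul_eq_zero_of_ker_mulVecLin_le h hker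
  rw [Matrix.mul_sub, Matrix.mul_one, ← Matrix.mul_assoc] at hρ
  exact (sub_eq_zero.1 hρ).symm

end KernelOfTripleProduct

lemma ker_mulVecLin_sum_le_of_posSemidef [Fintype κ] {A : κ → Matrix n n 𝕜}
    (hA : ∀ k, (A k).PosSemidef) (l : κ) :
    (∑ k, A k).mulVecLin.ker ≤ (A l).mulVecLin.ker := by
  intro w hw
  have hsum : ∑ k, star w ⬝ᵥ (A k *ᵥ w) = 0 := by
    rw [← dotProduct_sum, ← Matrix.sum_mulVec, ← mulVecLin_apply, LinearMap.mem_ker.1 hw,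
      dotProduct_zero]
  have hl : star w ⬝ᵥ (A l *ᵥ w) = 0 :=
    (Finset.sum_eq_zero_iff_of_nonneg fun k _ => (hA k).dotProduct_mulVec_nonneg w).1 hsum l
      (Finset.mem_univ l)
  exact ((hA l).dotProduct_mulVec_zero_iff w).1 hl

lemma ker_mulVecLin_sum_smul_le_of_posSemidef [Fintype κ] {q : κ → ℝ} {A : κ → Matrix n n 𝕜}
    (hq : ∀ k, 0 ≤ q k) (hA : ∀ k, (A k).PosSemidef) {l : κ} (hl : 0 < q l) :
    (∑ k, (q k : 𝕜) • A k).mulVecLin.ker ≤ (A l).mulVecLin.ker := by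
  have hpsd : ∀ k, ((q k : 𝕜) • A k).PosSemidef := fun k =>
    (hA k).smul (RCLike.ofReal_nonneg.2 (hq k))
  exact (ker_mulVecLin_sum_le_of_posSemidef hpsd l).trans fun w hw =>
    (smul_eq_zero_iff_right (RCLike.ofReal_ne_zero.2 hl.ne')).1
      ((smul_mulVec _ (A l) w).symm.trans hw)

lemma exists_conjTranspose_mul_eq_one [Fintype m] [DecidableEq n] {M : Matrix m n 𝕜}
    (hM : Function.Injective M.mulVec) : ∃ R : Matrix m n 𝕜, Mᴴ * R = 1 := by
  have hG : IsUnit (Mᴴ * M).det :=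
    (isUnit_iff_isUnit_det _).1 (PosDef.conjTranspose_mul_self M hM).isUnit
  exact ⟨M * (Mᴴ * M)⁻¹, by rw [← Matrix.mul_assoc, mul_nonsing_inv _ hG]⟩

lemma mul_conjTranspose_fin_two_of_skewHermitian {R : Type*} [CommRing R] [StarRing R]
    {K : Matrix (Fin 2) (Fin 2) R} (hK : Kᴴ = -K) (htr : K.trace = 0) : K * Kᴴ = K.det • 1 := by
  have hadj : K.adjugate = -K := by
    rw [trace_fin_two] at htr
    ext i j
    fin_cases i <;> fin_cases j <;> simp [adjugate_fin_two] <;> linear_combination htr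
  rw [hK, ← hadj, mul_adjugate]

lemma eq_zero_of_mul_eq_smul_of_not_commute {A B : Matrix (Fin 2) (Fin 2) 𝕜} (hA : A.IsHermitian)
    (hB : B.IsHermitian) (hAB : ¬ Commute A B) {W : Matrix m (Fin 2) 𝕜} {α β : 𝕜}
    (hWA : W * A = α • W) (hWB : W * B = β • W) : W = 0 := by
  set K := A * B - B * A with hK
  have hK0 : K ≠ 0 := fun h => hAB (sub_eq_zero.1 h)
  have hskew : Kᴴ = -K := by simp [hK, hA.eq, hB.eq]
  have htr : K.trace = 0 := by rw [hK, trace_sub, trace_mul_comm, sub_self]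
  have hdet : K.det ≠ 0 := fun h => hK0 <| self_mul_conjTranspose_eq_zero.1 <| by
    rw [mul_conjTranspose_fin_two_of_skewHermitian hskew htr, h, zero_smul]
  have hWK : W * K = 0 := by
    rw [hK, Matrix.mul_sub, ← Matrix.mul_assoc, ← Matrix.mul_assoc, hWA, hWB, smul_mul, smul_mul,
      hWA, hWB, smul_comm, sub_self]
  rw [← mul_nonsing_inv_cancel_right K W hdet.isUnit, hWK, Matrix.zero_mul]

end LinearAlgebra

section Observables

variable {d : ℕ} {O : Matrix (Fin d) (Fin d) ℂ}

lemma Dichotomic.transpose (hO : Dichotomic O) : Dichotomic Oᵀ :=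
  ⟨hO.1.transpose, by rw [← transpose_mul, hO.2, transpose_one]⟩

lemma transpose_proj (a : Fin 2) (O : Matrix (Fin d) (Fin d) ℂ) : (Proj a O)ᵀ = Proj a Oᵀ := by
  unfold Proj
  split_ifs <;> simp

lemma Dichotomic.proj_mul_proj (hO : Dichotomic O) (a : Fin 2) :
    Proj a O * Proj a O = Proj a O := by
  unfold Proj
  split_ifs <;> simp [Matrix.mul_add, Matrix.add_mul, hO.2] <;> module

lemma mul_eq_smul_of_mul_proj_eq_self {m : Type*} {W : Matrix m (Fin d) ℂ} {a : Fin 2}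
    (h : W * Proj a O = W) : W * O = (if a = 0 then 1 else -1 : ℂ) • W := by
  unfold Proj at h
  rw [Matrix.mul_smul, Matrix.mul_add, Matrix.mul_one, inv_smul_eq_iff₀ two_ne_zero] at h
  split_ifs at h ⊢
  · rw [one_smul, eq_sub_of_add_eq' h, two_smul, add_sub_cancel_right]
  · rw [Matrix.mul_neg, ← sub_eq_add_neg] at h
    rw [neg_one_smul, ← sub_sub_cancel W (W * O), h, two_smul, sub_add_cancel_left]

end Observables

/-- The coefficient matrix of a pure state across the cut `A|BC`, with Alice's index as the column
index: it maps the coordinates of `⟨u|` to those of the Bob–Charlie vector `⟨u|ψ⟩`. -/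
def coeffMatrix {dA dB : ℕ} (ψ : Fin dA × Fin dB × Fin 2 → ℂ) :
    Matrix (Fin dB × Fin 2) (Fin dA) ℂ :=
  Matrix.of fun i k => ψ (k, i)

lemma condStateBC_outer (ψ : Fin 2 × Fin 2 × Fin 2 → ℂ) (X : Matrix (Fin 2) (Fin 2) ℂ)
    (a : Fin 2) :
    condStateBC (outer ψ) X a = coeffMatrix ψ * Proj a Xᵀ * (coeffMatrix ψ)ᴴ := by
  rw [← transpose_proj]
  ext i j
  simp only [condStateBC, trA3, outer, coeffMatrix, Matrix.mul_apply, kroneckerMap_apply,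
    Matrix.one_apply, of_apply, transpose_apply, conjTranspose_apply, Prod.mk.eta, mul_ite, mul_one,
    mul_zero, ite_mul, zero_mul, Fintype.sum_prod_type, Finset.sum_ite_eq, Finset.mem_univ,
    ↓reduceIte, Fin.sum_univ_two]
  ring

lemma coeffMatrix_mulVec_injective {dB : ℕ} {ψ : Fin 2 × Fin dB × Fin 2 → ℂ}
    (hψ : ¬ BisepA ψ) : Function.Injective (coeffMatrix ψ).mulVec := by
  rw [← coe_mulVecLin, ← LinearMap.ker_eq_bot, LinearMap.ker_eq_bot']
  intro c hc
  have hdep : ∀ i, ψ (0, i) * c 0 + ψ (1, i) * c 1 = 0 := fun i => by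
    simpa [coeffMatrix, Matrix.mulVec, dotProduct] using congrFun hc i
  by_cases h0 : c 0 = 0
  · by_cases h1 : c 1 = 0
    · ext k
      fin_cases k <;> assumption
    · refine absurd ⟨![1, 0], fun i => ψ (0, i), fun i j k => ?_⟩ hψ
      fin_cases i
      · simp
      · simpa [h0, h1] using hdep (j, k)
  · refine absurd ⟨![-(c 1 / c 0), 1], fun i => ψ (1, i), fun i j k => ?_⟩ hψ
    fin_cases i
    · simp only [Fin.zero_eta, cons_val_zero]
      field_simp
      linear_combination hdep (j, k)
    · simp

lemma eq_zero_of_ker_condStateBC_le {ψ : Fin 2 × Fin 2 × Fin 2 → ℂ} (hψ : ¬ BisepA ψ)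
    {X Y : Matrix (Fin 2) (Fin 2) ℂ} (hX : Dichotomic X) (hY : Dichotomic Y)
    (hXY : ¬ Commute X Y) {a b : Fin 2} {ρ : Matrix (Fin 2 × Fin 2) (Fin 2 × Fin 2) ℂ}
    (hρX : (condStateBC (outer ψ) X a).mulVecLin.ker ≤ ρ.mulVecLin.ker)
    (hρY : (condStateBC (outer ψ) Y b).mulVecLin.ker ≤ ρ.mulVecLin.ker) : ρ = 0 := by
  set M := coeffMatrix ψ
  obtain ⟨R, hR⟩ := exists_conjTranspose_mul_eq_one (coeffMatrix_mulVec_injective hψ)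
  have heig : ∀ {Z : Matrix (Fin 2) (Fin 2) ℂ} {c : Fin 2}, Dichotomic Z →
      (condStateBC (outer ψ) Z c).mulVecLin.ker ≤ ρ.mulVecLin.ker →
      ρ * R * Zᵀ = (if c = 0 then 1 else -1 : ℂ) • (ρ * R) := fun hZ hρZ =>
    mul_eq_smul_of_mul_proj_eq_self <|
      mul_mul_idempotent_eq_of_ker_le hR (hZ.transpose.proj_mul_proj _)
        (condStateBC_outer ψ _ _ ▸ hρZ)
  have hcomm : ¬ Commute Xᵀ Yᵀ := fun h =>
    hXY (transpose_injective (by rw [transpose_mul, transpose_mul]; exact h.eq.symm))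
  have hW : ρ * R = 0 := eq_zero_of_mul_eq_smul_of_not_commute hX.transpose.1 hY.transpose.1 hcomm
    (heig hX hρX) (heig hY hρY)
  calc ρ = ρ * R * Mᴴ :=
        (mul_rightInverse_mul_eq_self_of_ker_le hR (condStateBC_outer ψ _ _ ▸ hρX)).symm
    _ = 0 := by rw [hW, Matrix.zero_mul]

theorem stmt6_general {ψ : Fin 2 × Fin 2 × Fin 2 → ℂ} (hψ : ¬ BisepA ψ)
    {X : Fin 2 → Matrix (Fin 2) (Fin 2) ℂ} (hX : ∀ x, Dichotomic (X x))
    (hXX : ¬ Commute (X 0) (X 1)) :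
    ¬ ∃ (n : ℕ) (p : Fin n → ℝ) (ρBC : Fin n → Matrix (Fin 2 × Fin 2) (Fin 2 × Fin 2) ℂ)
      (PA : Fin 2 → Fin 2 → Fin n → ℝ),
      (∀ l, 0 ≤ p l) ∧ (∑ l, p l) = 1 ∧
      (∀ l, (ρBC l).PosSemidef ∧ (ρBC l).trace = 1) ∧
      (∀ a x l, 0 ≤ PA a x l ∧ PA a x l ≤ 1) ∧
      (∀ x l, ∑ a, PA a x l = 1) ∧
      (∀ a x, condStateBC (outer ψ) (X x) a = ∑ l, ((p l * PA a x l : ℝ) : ℂ) • ρBC l) := by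
  rintro ⟨n, p, ρ, PA, hp, hp1, hρ, hPA, hPA1, hσ⟩
  obtain ⟨l, -, hl⟩ : ∃ l ∈ Finset.univ, 0 < p l :=
    Finset.exists_lt_of_sum_lt (by simp [hp1])
  have hker : ∀ x, ∃ a, (condStateBC (outer ψ) (X x) a).mulVecLin.ker ≤ (ρ l).mulVecLin.ker := by
    intro x
    obtain ⟨a, -, ha⟩ : ∃ a ∈ Finset.univ, 0 < PA a x l :=
      Finset.exists_lt_of_sum_lt (by simp only [hPA1, Finset.sum_const_zero, zero_lt_one])
    refine ⟨a, ?_⟩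
    rw [hσ]
    exact ker_mulVecLin_sum_smul_le_of_posSemidef
      (fun k => mul_nonneg (hp k) (hPA a x k).1) (fun k => (hρ k).1) (mul_pos hl ha)
  obtain ⟨a, ha⟩ := hker 0
  obtain ⟨b, hb⟩ := hker 1
  have hzero : ρ l = 0 := eq_zero_of_ker_condStateBC_le hψ (hX 0) (hX 1) hXX ha hb
  simpa [hzero] using (hρ l).2

lemma not_bisepA_wState {c0 c1 : ℝ} (hc0 : c0 ≠ 0) (hsum : c0 ^ 2 + c1 ^ 2 < 1) :
    ¬ BisepA (wState c0 c1) := by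
  rintro ⟨u, v, h⟩
  have hs : Real.sqrt (1 - c0 ^ 2 - c1 ^ 2) ≠ 0 := (Real.sqrt_pos.2 (by linarith)).ne'
  have h000 : u 0 * v (0, 0) = 0 := by simp [← h, wState]
  have h001 : u 0 * v (0, 1) ≠ 0 := by simp [← h, wState, hc0]
  have h100 : u 1 * v (0, 0) ≠ 0 := by simp [← h, wState, hs]
  exact mul_ne_zero (left_ne_zero_of_mul h001) (right_ne_zero_of_mul h100) h000

lemma dichotomic_XA (x : Fin 2) : Dichotomic (XA x) := by
  fin_cases x <;> constructor <;> ext i j <;> fin_cases i <;> fin_cases j <;>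
    simp [XA, sx, sy, Matrix.mul_apply]

lemma not_commute_XA : ¬ Commute (XA 0) (XA 1) := by
  intro h
  have him := congrArg Complex.im (congrFun₂ h 0 0)
  norm_num [XA, sx, sy, Matrix.mul_apply] at him

/-- the assemblage on the Bob–Charlie pair prepared from a pure W-class state by
Alice's measurements `σx, σy` admits no LHS-type decomposition. -/
theorem stmt6 (c0 c1 : ℝ) (hc0 : 0 < c0) (hc1 : 0 < c1) (hsum : c0 ^ 2 + c1 ^ 2 < 1) :
    ¬ ∃ (n : ℕ) (p : Fin n → ℝ) (ρBC : Fin n → Matrix (Fin 2 × Fin 2) (Fin 2 × Fin 2) ℂ)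
      (PA : Fin 2 → Fin 2 → Fin n → ℝ),
      (∀ l, 0 ≤ p l) ∧ (∑ l, p l) = 1 ∧
      (∀ l, (ρBC l).PosSemidef ∧ (ρBC l).trace = 1) ∧
      (∀ a x l, 0 ≤ PA a x l ∧ PA a x l ≤ 1) ∧
      (∀ x l, ∑ a, PA a x l = 1) ∧
      (∀ a x, condStateBC (outer (wState c0 c1)) (XA x) a
        = ∑ l, ((p l * PA a x l : ℝ) : ℂ) • ρBC l) :=
  stmt6_general (not_bisepA_wState hc0.ne' hsum) dichotomic_XA not_commute_XA

end Paper
end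
end

section
/- Let c₀, c₁ > 0 with c₀² + c₁² < 1 and let |ψ_W⟩ = c₀|001⟩ + c₁|010⟩ + √(1−c₀²−c₁²)|100⟩ be a pure W-class state. Let Alice measure X₀ = σx, X₁ = σy and Bob measure Y₀ = (σx+σz)/√2, Y₁ = (σy+σz)/√2. Then the assemblage of Charlie's unnormalized conditional states σ^C_{a,b|X_x,Y_y} = Tr_{AB}[(Π_{a|X_x} ⊗ Π_{b|Y_y} ⊗ I₂) |ψ_W⟩⟨ψ_W|] admits no local-hidden-state (LHS) model. -/
open Matrix Complex
open scoped Matrix Kronecker ComplexOrder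

noncomputable section
namespace Paper

/-! In an LHS model, a hidden state `ρ` of positive weight lies, up to a positive factor, below one
of Charlie's conditional states for every pair of settings, Alice's outcome depending only on her
setting and Bob's only on his. Fix Bob's setting; his outcome projects the state onto a pure
Alice–Charlie state, with coefficient matrix `M`. If Alice's outcome has projector `P`, Charlie's
conditional state is `(Mᴴ P M)ᵀ`, so positivity forces the kernel of `Mᴴ P M` into that of `ρᵀ`.
When `M` is invertible (that is, the projected state is entangled), `N = ρᵀ M⁻¹` therefore satisfies
`N P = N`, so `N X = ± N` for both of Alice's observables and `N` kills their commutator. A nonzero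
commutator of Hermitian 2×2 matrices is invertible, so `N = 0` and `ρ = 0`, contradicting
`tr ρ = 1`. For the W-class state, `M` is invertible unless Bob projects onto `|1⟩`. -/

section LinearAlgebra

variable {𝕜 : Type*} [RCLike 𝕜]

lemma mul_eq_zero_of_posSemidef_sub {m n : Type*} [Fintype m] {A B : Matrix m m 𝕜}
    (hA : A.PosSemidef) (hAB : (B - A).PosSemidef) {C : Matrix m n 𝕜}
    (hBC : B * C = 0) : A * C = 0 := by
  ext i j
  have hBv : B *ᵥ C.col j = 0 := funext fun k => congrFun (congrFun hBC k) j
  have hle : star (C.col j) ⬝ᵥ (A *ᵥ C.col j) ≤ 0 := by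
    simpa [Matrix.sub_mulVec, hBv] using hAB.dotProduct_mulVec_nonneg (C.col j)
  have hAv : A *ᵥ C.col j = 0 :=
    (hA.dotProduct_mulVec_zero_iff _).1 (hle.antisymm (hA.dotProduct_mulVec_nonneg _))
  exact congrFun hAv i

lemma mul_commutator_eq_zero {R m n : Type*} [CommRing R] [Fintype n] {N : Matrix m n R}
    {A B : Matrix n n R} {s t : R} (hA : N * A = s • N) (hB : N * B = t • N) :
    N * (A * B - B * A) = 0 := by
  rw [Matrix.mul_sub, ← Matrix.mul_assoc, ← Matrix.mul_assoc, hA, hB, Matrix.smul_mul,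
    Matrix.smul_mul, hA, hB, smul_comm, sub_self]

lemma det_ne_zero_of_conjTranspose_eq_neg_of_trace_eq_zero {K : Matrix (Fin 2) (Fin 2) 𝕜}
    (hK : Kᴴ = -K) (htr : K.trace = 0) (hK0 : K ≠ 0) : K.det ≠ 0 := by
  intro hdet
  have cayley_hamilton : K * K = 0 := by
    simpa [Matrix.charpoly_fin_two, htr, hdet, sq] using Matrix.aeval_self_charpoly K
  have hKK : Kᴴ * K = 0 := by rw [hK, Matrix.neg_mul, cayley_hamilton, neg_zero]
  exact hK0 (Matrix.conjTranspose_mul_self_eq_zero.1 hKK)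

lemma det_commutator_ne_zero_s7 {A B : Matrix (Fin 2) (Fin 2) 𝕜} (hA : A.IsHermitian)
    (hB : B.IsHermitian) (hAB : ¬ Commute A B) : (A * B - B * A).det ≠ 0 :=
  det_ne_zero_of_conjTranspose_eq_neg_of_trace_eq_zero
    (by rw [Matrix.conjTranspose_sub, Matrix.conjTranspose_mul, Matrix.conjTranspose_mul,
      hA.eq, hB.eq, neg_sub])
    (by rw [Matrix.trace_sub, Matrix.trace_mul_comm, sub_self])
    (fun h => hAB (sub_eq_zero.1 h))

lemma exists_eq_outer_of_det_eq_zero {A : Matrix (Fin 2) (Fin 2) ℂ} (hA : A.PosSemidef)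
    (hdet : A.det = 0) : ∃ u : Fin 2 → ℂ, A = outer u := by
  have h10 : A 1 0 = star (A 0 1) := (hA.isHermitian.apply 1 0).symm
  obtain ⟨p, hp, hp00⟩ := RCLike.nonneg_iff_exists_ofReal.1 (hA.diag_nonneg (i := 0))
  obtain ⟨q, hq, hq11⟩ := RCLike.nonneg_iff_exists_ofReal.1 (hA.diag_nonneg (i := 1))
  have sqrt_mul_sqrt {r : ℝ} (hr : 0 ≤ r) : (√r : ℂ) * √r = r := by
    exact_mod_cast Real.mul_self_sqrt hr
  rw [Matrix.det_fin_two, ← hp00, ← hq11, h10] at hdet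
  rcases hp.eq_or_lt with rfl | hp
  · have h01 : A 0 1 = 0 := by simpa using hdet
    refine ⟨![0, √q], ?_⟩
    ext i j
    fin_cases i <;> fin_cases j <;>
      simp [outer, ← hp00, ← hq11, h10, h01, sqrt_mul_sqrt hq]
  · have hsqrt : (√p : ℂ) ≠ 0 := by exact_mod_cast (Real.sqrt_pos.2 hp).ne'
    have hq_eq : (q : ℂ) = star (A 0 1) * A 0 1 / p := by
      rw [eq_div_iff (by exact_mod_cast hp.ne')]
      linear_combination hdet
    refine ⟨![√p, star (A 0 1) / √p], ?_⟩
    ext i j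
    fin_cases i <;> fin_cases j <;>
      simp [outer, ← hp00, ← hq11, h10, hq_eq, hsqrt, div_mul_div_comm, mul_div_cancel₀,
        sqrt_mul_sqrt hp.le]

lemma exists_eq_outer_of_isStarProjection {P : Matrix (Fin 2) (Fin 2) ℂ}
    (hP : IsStarProjection P) (hP1 : P ≠ 1) : ∃ u : Fin 2 → ℂ, P = outer u := by
  have hpos : P.PosSemidef := by
    rw [← hP.isIdempotentElem.eq]
    nth_rw 1 [← hP.isSelfAdjoint.star_eq]
    exact Matrix.posSemidef_conjTranspose_mul_self P
  refine exists_eq_outer_of_det_eq_zero hpos ?_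
  by_contra hdet
  have hunit : IsUnit P := (Matrix.isUnit_iff_isUnit_det P).2 (isUnit_iff_ne_zero.2 hdet)
  exact hP1 ((IsIdempotentElem.iff_eq_one_of_isUnit hunit).1 hP.isIdempotentElem)

end LinearAlgebra

section Measurements

variable {d : ℕ} {O : Matrix (Fin d) (Fin d) ℂ}

lemma Dichotomic.isStarProjection_proj (hO : Dichotomic O) (a : Fin 2) :
    IsStarProjection (Proj a O) := by
  obtain ⟨hherm, hsq⟩ := hO
  obtain ⟨S, hS, hSherm, hSsq⟩ : ∃ S, Proj a O = (2 : ℂ)⁻¹ • (1 + S) ∧ Sᴴ = S ∧ S * S = 1 := by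
    refine ⟨if a = 0 then O else -O, rfl, ?_, ?_⟩ <;> split_ifs <;> simp [hherm.eq, hsq]
  rw [hS]
  constructor
  · have hdouble : (1 + S) * (1 + S) = (2 : ℂ) • (1 + S) := by
      simp only [add_mul, mul_add, one_mul, mul_one, hSsq, two_smul]
      abel
    rw [IsIdempotentElem, smul_mul_smul_comm, hdouble, smul_smul]
    norm_num
  · simp [isSelfAdjoint_iff, Matrix.star_eq_conjTranspose, hSherm]

lemma exists_mul_eq_smul_of_mul_proj_eq {m : Type*} {N : Matrix m (Fin d) ℂ} {a : Fin 2}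
    (hN : N * Proj a O = N) : ∃ s : ℂ, N * O = s • N := by
  have hN' : N * (1 + if a = 0 then O else -O) = (2 : ℂ) • N := by
    nth_rw 2 [← hN]
    rw [Proj, Matrix.mul_smul, smul_inv_smul₀ two_ne_zero]
  rw [Matrix.mul_add, Matrix.mul_one, two_smul, add_left_cancel_iff] at hN'
  split_ifs at hN'
  · exact ⟨1, by simpa using hN'⟩
  · exact ⟨-1, by simpa [neg_eq_iff_eq_neg] using hN'⟩

end Measurements

section Steering

lemma HasLHS.exists_posSemidef_sub_smul
    {σ : Fin 2 → Fin 2 → Fin 2 → Fin 2 → Matrix (Fin 2) (Fin 2) ℂ} (h : HasLHS σ) :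
    ∃ (a b : Fin 2 → Fin 2) (ρ : Matrix (Fin 2) (Fin 2) ℂ), ρ.PosSemidef ∧ ρ.trace = 1 ∧
      ∀ x y, ∃ r : ℝ, 0 < r ∧ (σ (a x) (b y) x y - (r : ℂ) • ρ).PosSemidef := by
  obtain ⟨n, p, ρ, PA, PB, hp, hp1, hρ, hA, hB, hA1, hB1, hσ⟩ := h
  have exists_pos {m : ℕ} (q : Fin m → ℝ) (hq : ∑ i, q i = 1) : ∃ i, 0 < q i := by
    simpa using Finset.exists_lt_of_sum_lt (s := Finset.univ) (f := 0) (g := q) (by simp [hq])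
  obtain ⟨l, hl⟩ := exists_pos p hp1
  choose a ha using fun x => exists_pos (fun a => PA a x l) (hA1 x l)
  choose b hb using fun y => exists_pos (fun b => PB b y l) (hB1 y l)
  refine ⟨a, b, ρ l, (hρ l).1, (hρ l).2, fun x y =>
    ⟨p l * PA (a x) x l * PB (b y) y l, mul_pos (mul_pos hl (ha x)) (hb y), ?_⟩⟩
  rw [hσ, ← Finset.sum_erase_eq_sub (Finset.mem_univ l)]
  exact Matrix.posSemidef_sum _ fun k _ => (hρ k).1.smul <| by
    exact_mod_cast mul_nonneg (mul_nonneg (hp k) (hA _ _ k).1) (hB _ _ k).1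

variable {dA dB : ℕ}

/-- The unnormalized joint state of Alice and Charlie after Bob's system is projected onto `β`,
encoded as its coefficient matrix, with rows indexed by Alice and columns by Charlie. -/
def bobProjected (ψ : Fin dA × Fin dB × Fin 2 → ℂ) (β : Fin dB → ℂ) :
    Matrix (Fin dA) (Fin 2) ℂ :=
  Matrix.of fun i k => ∑ j, star (β j) * ψ (i, j, k)

lemma transpose_condState_outer (ψ : Fin dA × Fin dB × Fin 2 → ℂ)
    (X : Matrix (Fin dA) (Fin dA) ℂ) {Y : Matrix (Fin dB) (Fin dB) ℂ} (a : Fin 2) {b : Fin 2}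
    {β : Fin dB → ℂ} (hβ : Proj b Y = outer β) :
    (condState (outer ψ) X Y a b)ᵀ =
      (bobProjected ψ β)ᴴ * Proj a X * bobProjected ψ β := by
  ext i j
  have expand_left : (condState (outer ψ) X Y a b)ᵀ i j =
      ∑ q : Fin dA × Fin dB, ∑ q' : Fin dA × Fin dB,
        Proj a X q.1 q'.1 * (β q.2 * star (β q'.2)) *
          (ψ (q'.1, q'.2, j) * star (ψ (q.1, q.2, i))) := by
    simp [condState, hβ, trAB, outer, Matrix.mul_apply, Fintype.sum_prod_type, Matrix.one_apply]
  have expand_right : ((bobProjected ψ β)ᴴ * Proj a X * bobProjected ψ β) i j =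
      ∑ q' : Fin dA × Fin dB, ∑ q : Fin dA × Fin dB,
        β q.2 * star (ψ (q.1, q.2, i)) * Proj a X q.1 q'.1 *
          (star (β q'.2) * ψ (q'.1, q'.2, j)) := by
    simp [bobProjected, Matrix.mul_apply, Fintype.sum_prod_type, Finset.sum_mul, Finset.mul_sum]
  rw [expand_left, expand_right, Finset.sum_comm]
  exact Finset.sum_congr rfl fun _ _ => Finset.sum_congr rfl fun _ _ => by ring

lemma transpose_mul_inv_mul_proj {ψ : Fin 2 × Fin dB × Fin 2 → ℂ}
    {X : Matrix (Fin 2) (Fin 2) ℂ} {Y : Matrix (Fin dB) (Fin dB) ℂ} {a b : Fin 2}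
    (hX : Dichotomic X) {β : Fin dB → ℂ} (hβ : Proj b Y = outer β)
    (hM : (bobProjected ψ β).det ≠ 0) {ρ : Matrix (Fin 2) (Fin 2) ℂ} (hρ : ρ.PosSemidef)
    {r : ℝ} (hr : 0 < r)
    (hle : (condState (outer ψ) X Y a b - (r : ℂ) • ρ).PosSemidef) :
    ρᵀ * (bobProjected ψ β)⁻¹ * Proj a X = ρᵀ * (bobProjected ψ β)⁻¹ := by
  set M := bobProjected ψ β
  have hker : (condState (outer ψ) X Y a b)ᵀ * (M⁻¹ * (1 - Proj a X)) = 0 := by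
    rw [transpose_condState_outer ψ X a hβ, Matrix.mul_assoc, Matrix.mul_assoc,
      Matrix.mul_nonsing_inv_cancel_left _ _ (isUnit_iff_ne_zero.2 hM),
      (hX.isStarProjection_proj a).isIdempotentElem.mul_one_sub_self, Matrix.mul_zero]
  have hr' : (0 : ℂ) ≤ r := by exact_mod_cast hr.le
  have hρker : ((r : ℂ) • ρᵀ) * (M⁻¹ * (1 - Proj a X)) = 0 :=
    mul_eq_zero_of_posSemidef_sub (hρ.transpose.smul hr')
      (by simpa using hle.transpose) hker
  rw [Matrix.smul_mul, smul_eq_zero_iff_right (by exact_mod_cast hr.ne'), ← Matrix.mul_assoc,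
    Matrix.mul_sub, Matrix.mul_one, sub_eq_zero] at hρker
  exact hρker.symm

theorem not_hasLHS_of_det_bobProjected_ne_zero {ψ : Fin 2 × Fin dB × Fin 2 → ℂ}
    {X : Fin 2 → Matrix (Fin 2) (Fin 2) ℂ} {Y : Fin 2 → Matrix (Fin dB) (Fin dB) ℂ}
    (hX : ∀ x, Dichotomic (X x)) (hXX : ¬ Commute (X 0) (X 1)) {y : Fin 2}
    (hY : ∀ b, ∃ β, Proj b (Y y) = outer β ∧ (bobProjected ψ β).det ≠ 0) :
    ¬ HasLHS (fun a b x y => condState (outer ψ) (X x) (Y y) a b) := by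
  intro hLHS
  obtain ⟨a, b, ρ, hρ, hρtr, hle⟩ := hLHS.exists_posSemidef_sub_smul
  obtain ⟨β, hβ, hM⟩ := hY (b y)
  set N := ρᵀ * (bobProjected ψ β)⁻¹ with hN
  have eigen : ∀ x, ∃ s : ℂ, N * X x = s • N := fun x => by
    obtain ⟨r, hr, hr_le⟩ := hle x y
    exact exists_mul_eq_smul_of_mul_proj_eq
      (transpose_mul_inv_mul_proj (hX x) hβ hM hρ hr hr_le)
  obtain ⟨s, hs⟩ := eigen 0
  obtain ⟨t, ht⟩ := eigen 1
  have hcomm : IsUnit (X 0 * X 1 - X 1 * X 0) := (Matrix.isUnit_iff_isUnit_det _).2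
    (isUnit_iff_ne_zero.2 (det_commutator_ne_zero_s7 (hX 0).1 (hX 1).1 hXX))
  have hN0 : N = 0 := hcomm.mul_left_eq_zero.1 (mul_commutator_eq_zero hs ht)
  have hρ0 : ρᵀ = 0 := by
    rw [← Matrix.nonsing_inv_mul_cancel_right _ ρᵀ (isUnit_iff_ne_zero.2 hM), ← hN, hN0,
      Matrix.zero_mul]
  simp [Matrix.transpose_eq_zero.1 hρ0] at hρtr

end Steering

section WState

lemma bobProjected_wState (c0 c1 : ℝ) (β : Fin 2 → ℂ) :
    bobProjected (wState c0 c1) β =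
      !![star (β 1) * c1, star (β 0) * c0;
        star (β 0) * Real.sqrt (1 - c0 ^ 2 - c1 ^ 2), 0] := by
  ext i k
  fin_cases i <;> fin_cases k <;> simp [bobProjected, wState]

theorem stmt7_general {c0 c1 : ℝ} (hc0 : c0 ≠ 0) (hsum : c0 ^ 2 + c1 ^ 2 < 1)
    {X Y : Fin 2 → Matrix (Fin 2) (Fin 2) ℂ} (hX : ∀ x, Dichotomic (X x))
    (hXX : ¬ Commute (X 0) (X 1)) {y : Fin 2} (hY : Dichotomic (Y y)) (hY01 : Y y 0 1 ≠ 0) :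
    ¬ HasLHS (fun a b x y => condState (outer (wState c0 c1)) (X x) (Y y) a b) := by
  refine not_hasLHS_of_det_bobProjected_ne_zero hX hXX (y := y) fun b => ?_
  have hProj01 : Proj b (Y y) 0 1 ≠ 0 := by
    simp only [Proj]
    split_ifs <;> simpa
  obtain ⟨β, hβ⟩ := exists_eq_outer_of_isStarProjection (hY.isStarProjection_proj b)
    (fun h => hProj01 (by simp [h]))
  have hβ0 : β 0 ≠ 0 := fun h => hProj01 (by simp [hβ, outer, h])
  have hsqrt : Real.sqrt (1 - c0 ^ 2 - c1 ^ 2) ≠ 0 := (Real.sqrt_pos.2 (by linarith)).ne'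
  refine ⟨β, hβ, ?_⟩
  rw [bobProjected_wState, Matrix.det_fin_two_of]
  simp [hβ0, hc0, hsqrt]

lemma dichotomic_YB_zero : Dichotomic (YB 0) := by
  have hsq : (Real.sqrt 2 : ℂ)⁻¹ * (Real.sqrt 2 : ℂ)⁻¹ = 2⁻¹ := by
    rw [← mul_inv, ← ofReal_mul, Real.mul_self_sqrt zero_le_two, ofReal_ofNat]
  constructor
  · ext i j
    fin_cases i <;> fin_cases j <;> simp [YB, sx, sz]
  · ext i j
    fin_cases i <;> fin_cases j <;> simp [YB, sx, sz, hsq, ← two_mul]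

end WState

/-- the assemblage prepared on Charlie's qubit from a pure W-class state by
Alice's measurements `σx, σy` and Bob's measurements `(σx+σz)/√2, (σy+σz)/√2` admits no LHS
model. -/
theorem stmt7 (c0 c1 : ℝ) (hc0 : 0 < c0) (hc1 : 0 < c1) (hsum : c0 ^ 2 + c1 ^ 2 < 1) :
    ¬ HasLHS (fun a b x y => condState (outer (wState c0 c1)) (XA x) (YB y) a b) :=
  stmt7_general hc0.ne' hsum dichotomic_XA not_commute_XA dichotomic_YB_zero (by simp [YB, sx, sz])

end Paper
end
end

section
/- Let θ ∈ (0, π/2), let |ψ(θ)⟩ = cos θ·|000⟩ + sin θ·|111⟩ be the generalized GHZ state, and let X₀ = σx, X₁ = σy, Y₀ = (σx+σz)/√2, Y₁ = (σy+σz)/√2. Then for all a, b ∈ {0,1} and y ∈ {0,1}, Tr[σ^C_{a,b|X₀,Y_y}] > 0 and the normalized conditional state ϱ^C_{a,b|X₀,Y_y} = σ^C_{a,b|X₀,Y_y}/Tr[σ^C_{a,b|X₀,Y_y}] is a rank-one orthogonal projection (i.e., a pure state), and the eight matrices ϱ^C_{0,0|X₀,Y₀}, ϱ^C_{0,1|X₀,Y₀},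 ϱ^C_{1,0|X₀,Y₀}, ϱ^C_{1,1|X₀,Y₀}, ϱ^C_{0,0|X₀,Y₁}, ϱ^C_{0,1|X₀,Y₁}, ϱ^C_{1,0|X₀,Y₁}, ϱ^C_{1,1|X₀,Y₁} are pairwise distinct. -/
open Matrix Complex
open scoped Matrix Kronecker ComplexOrder

noncomputable section
namespace Paper

/-- The normalized conditional state `ϱ = σ / Tr σ`. -/
def normState (σ : Matrix (Fin 2) (Fin 2) ℂ) : Matrix (Fin 2) (Fin 2) ℂ := (σ.trace)⁻¹ • σ

/-!
Write Alice's and Bob's outcome vectors as multiples of `|0⟩ + ζ|1⟩` and `|0⟩ + η|1⟩`. Such a pair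
of outcomes collapses the generalized GHZ state to a pure state of Charlie's qubit, with vector
proportional to `|0⟩ + (tan θ · conj (ζη))|1⟩`. A ray `|0⟩ + ζ|1⟩` is determined by its
stereographic coordinate `ζ`, so only the eight numbers `ζη` have to be distinguished. With
`r = 1/√2` they are `(-1)^a · (-1)^b r i^y / (1 + (-1)^b r)`: the modulus determines `b`, after
which the fourth root of unity `(-1)^a i^y` determines `a` and `y`.
-/

/-- A pure state as a density matrix: an orthogonal projection whose trace, hence whose rank,
is one. -/
def IsPureState {n : Type*} [Fintype n] (M : Matrix n n ℂ) : Prop :=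
  M.IsHermitian ∧ M * M = M ∧ M.trace = 1

section Outer

variable {n : Type*}

lemma outer_isHermitian (ψ : n → ℂ) : (outer ψ).IsHermitian := by
  ext i j
  simp [outer, mul_comm]

lemma outer_smul (c : ℂ) (ψ : n → ℂ) : outer (c • ψ) = (c * star c) • outer ψ := by
  ext i j
  simp only [outer, of_apply, Pi.smul_apply, Matrix.smul_apply, smul_eq_mul, star_mul']
  ring

variable [Fintype n]

lemma trace_outer_pos {ψ : n → ℂ} (hψ : ψ ≠ 0) : 0 < (outer ψ).trace :=
  dotProduct_self_star_pos_iff.mpr hψ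

lemma outer_mul_self (ψ : n → ℂ) : outer ψ * outer ψ = (outer ψ).trace • outer ψ := by
  change vecMulVec ψ (star ψ) * vecMulVec ψ (star ψ)
    = (vecMulVec ψ (star ψ)).trace • vecMulVec ψ (star ψ)
  rw [vecMulVec_mul_vecMulVec, trace_vecMulVec, dotProduct_comm, vecMulVec_smul]

end Outer

lemma normState_smul {c : ℂ} (hc : c ≠ 0) (M : Matrix (Fin 2) (Fin 2) ℂ) :
    normState (c • M) = normState M := by
  rw [normState, trace_smul, smul_smul, smul_eq_mul, _root_.mul_inv_rev, inv_mul_cancel_right₀ hc,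
    normState]

lemma isPureState_normState_outer {ψ : Fin 2 → ℂ} (hψ : ψ ≠ 0) :
    IsPureState (normState (outer ψ)) := by
  have htr : 0 < (outer ψ).trace := trace_outer_pos hψ
  have hreal : IsSelfAdjoint (outer ψ).trace⁻¹ := (IsSelfAdjoint.of_nonneg htr.le).inv₀
  refine ⟨(outer_isHermitian ψ).smul hreal, ?_, ?_⟩
  · rw [normState, smul_mul_smul_comm, outer_mul_self, smul_smul,
      inv_mul_cancel_right₀ htr.ne']
  · rw [normState, trace_smul, smul_eq_mul, inv_mul_cancel₀ htr.ne']

/-- The unnormalized qubit vector `|0⟩ + ζ|1⟩`, with stereographic coordinate `ζ` on the Bloch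
sphere. Every ray except that of `|1⟩` has exactly one such representative. -/
def stereoVec (ζ : ℂ) : Fin 2 → ℂ := ![1, ζ]

lemma stereoVec_ne_zero (ζ : ℂ) : stereoVec ζ ≠ 0 := fun h =>
  one_ne_zero (congrFun h 0)

lemma normState_outer_stereoVec_injective :
    Function.Injective fun ζ => normState (outer (stereoVec ζ)) := by
  intro ζ η h
  have htr : (outer (stereoVec η)).trace⁻¹ ≠ 0 :=
    inv_ne_zero (trace_outer_pos (stereoVec_ne_zero η)).ne'
  have h₀ : (outer (stereoVec ζ)).trace⁻¹ = (outer (stereoVec η)).trace⁻¹ := by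
    simpa [normState, outer, stereoVec] using congrFun₂ h 0 0
  have h₁ : (outer (stereoVec ζ)).trace⁻¹ * ζ = (outer (stereoVec η)).trace⁻¹ * η := by
    simpa [normState, outer, stereoVec] using congrFun₂ h 1 0
  rw [h₀] at h₁
  exact mul_left_cancel₀ htr h₁

/-- The traceless qubit observable with Bloch vector `(Re w, Im w, c)`. -/
def blochObs (c : ℝ) (w : ℂ) : Matrix (Fin 2) (Fin 2) ℂ := !![(c : ℂ), star w; w, -(c : ℂ)]

/-- The stereographic coordinate of the eigenvector of `blochObs c w` for the outcome `a`, that is,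
for the eigenvalue `(-1)^a`. It is the junk value `0` when that eigenvector is `|1⟩`. -/
def outcomeCoord (a : Fin 2) (c : ℝ) (w : ℂ) : ℂ :=
  (-1) ^ (a : ℕ) * w / (1 + (-1) ^ (a : ℕ) * c)

lemma one_add_neg_one_pow_mul_pos {c : ℝ} (hc : |c| < 1) (n : ℕ) : 0 < 1 + (-1) ^ n * c := by
  obtain ⟨hlo, hhi⟩ := abs_lt.mp hc
  rcases neg_one_pow_eq_or ℝ n with h | h <;> rw [h] <;> linarith

lemma Proj_eq {d : ℕ} (a : Fin 2) (O : Matrix (Fin d) (Fin d) ℂ) :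
    Proj a O = (2 : ℂ)⁻¹ • (1 + (-1 : ℂ) ^ (a : ℕ) • O) := by
  fin_cases a <;> simp [Proj]

lemma Proj_blochObs (a : Fin 2) {c : ℝ} {w : ℂ} (hc : 1 + (-1) ^ (a : ℕ) * c ≠ 0)
    (hcw : (c : ℂ) ^ 2 + w * star w = 1) :
    Proj a (blochObs c w)
      = ((1 + (-1) ^ (a : ℕ) * c) / 2 : ℂ) • outer (stereoVec (outcomeCoord a c w)) := by
  set s : ℂ := (-1) ^ (a : ℕ) with hs
  set ζ : ℂ := outcomeCoord a c w
  have hne : 1 + s * c ≠ 0 := by simpa only [hs] using mod_cast hc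
  have hsq : s ^ 2 = 1 := by rw [hs, ← pow_mul, pow_mul', neg_one_sq, one_pow]
  have hstar : star (1 + s * c) = 1 + s * c := by simp [hs]
  have hw : (1 + s * c) * ζ = s * w := mul_div_cancel₀ _ hne
  have hw' : (1 + s * c) * star ζ = s * star w := by
    rw [← hstar, ← star_mul', hw]
    simp [hs]
  have hnorm : (1 + s * c) * (ζ * star ζ) = 1 - s * c := by
    refine mul_left_cancel₀ hne ?_
    linear_combination (1 + s * c) * star ζ * hw + s * w * hw' + s ^ 2 * hcw + hsq
  rw [Proj_eq, div_eq_inv_mul, mul_smul]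
  congr 1
  ext i j
  fin_cases i <;> fin_cases j
  · simp [blochObs, outer, stereoVec, hs]
  · simpa [blochObs, outer, stereoVec] using hw'.symm
  · simpa [blochObs, outer, stereoVec] using hw.symm
  · simpa [blochObs, outer, stereoVec, sub_eq_add_neg] using hnorm.symm

/-- The vector `(⟨u| ⊗ ⟨v| ⊗ I)|ψ⟩` of Charlie's qubit. -/
def partialInner {dA dB : ℕ} (u : Fin dA → ℂ) (v : Fin dB → ℂ)
    (ψ : Fin dA × Fin dB × Fin 2 → ℂ) : Fin 2 → ℂ :=
  fun k => ∑ i, ∑ j, star (u i) * star (v j) * ψ (i, j, k)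

lemma condState_outer {dA dB : ℕ} (ψ : Fin dA × Fin dB × Fin 2 → ℂ)
    {X : Matrix (Fin dA) (Fin dA) ℂ} {Y : Matrix (Fin dB) (Fin dB) ℂ} {a b : Fin 2} {p q : ℂ}
    {u : Fin dA → ℂ} {v : Fin dB → ℂ} (hX : Proj a X = p • outer u)
    (hY : Proj b Y = q • outer v) :
    condState (outer ψ) X Y a b = (p * q) • outer (partialInner u v ψ) := by
  ext k l
  simp only [condState, hX, hY, trAB, partialInner, outer, of_apply, mul_apply,
    Matrix.smul_apply, smul_eq_mul, kroneckerMap_apply, one_apply, Fintype.sum_prod_type, mul_ite,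
    ite_mul, mul_one, mul_zero, zero_mul, Finset.sum_ite_eq, Finset.mem_univ, if_true, star_sum,
    star_mul', star_star, Finset.sum_mul, Finset.mul_sum]
  iterate 4 refine Finset.sum_congr rfl fun _ _ => ?_
  ring

lemma partialInner_ggHZ (θ : ℝ) (u v : Fin 2 → ℂ) :
    partialInner u v (ggHZ θ)
      = ![star (u 0) * star (v 0) * Real.cos θ, star (u 1) * star (v 1) * Real.sin θ] := by
  ext k
  fin_cases k <;> simp [partialInner, ggHZ]

lemma partialInner_stereoVec_ggHZ {θ : ℝ} (hθ : Real.cos θ ≠ 0) (ζ η : ℂ) :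
    partialInner (stereoVec ζ) (stereoVec η) (ggHZ θ)
      = (Real.cos θ : ℂ) • stereoVec (Real.tan θ * star (ζ * η)) := by
  have hsin : (Real.sin θ : ℂ) = Real.cos θ * Real.tan θ := by
    rw [← ofReal_mul, mul_comm, Real.tan_mul_cos hθ]
  rw [partialInner_ggHZ, hsin]
  ext k
  fin_cases k
  · simp [stereoVec]
  · simp [stereoVec, mul_comm, mul_assoc]

lemma condState_ggHZ {θ : ℝ} (hθ : Real.cos θ ≠ 0) {X Y : Matrix (Fin 2) (Fin 2) ℂ}
    {a b : Fin 2} {p q ζ η : ℂ} (hX : Proj a X = p • outer (stereoVec ζ))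
    (hY : Proj b Y = q • outer (stereoVec η)) :
    condState (outer (ggHZ θ)) X Y a b
      = (p * q * (Real.cos θ : ℂ) ^ 2) • outer (stereoVec (Real.tan θ * star (ζ * η))) := by
  rw [condState_outer (ggHZ θ) hX hY, partialInner_stereoVec_ggHZ hθ, outer_smul, smul_smul,
    Complex.star_def, conj_ofReal, sq]

lemma exists_condState_ggHZ_blochObs {θ : ℝ} (hθ : Real.cos θ ≠ 0) (a b : Fin 2) {c d : ℝ}
    {w z : ℂ} (hc : |c| < 1) (hcw : (c : ℂ) ^ 2 + w * star w = 1) (hd : |d| < 1)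
    (hdz : (d : ℂ) ^ 2 + z * star z = 1) :
    ∃ k : ℂ, 0 < k ∧ condState (outer (ggHZ θ)) (blochObs c w) (blochObs d z) a b =
      k • outer (stereoVec (Real.tan θ * star (outcomeCoord a c w * outcomeCoord b d z))) := by
  have ha := one_add_neg_one_pow_mul_pos hc a
  have hb := one_add_neg_one_pow_mul_pos hd b
  refine ⟨_, ?_, condState_ggHZ hθ (Proj_blochObs a ha.ne' hcw) (Proj_blochObs b hb.ne' hdz)⟩
  have hweight := mul_pos (mul_pos (half_pos ha) (half_pos hb)) (sq_pos_of_ne_zero hθ)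
  exact_mod_cast hweight

lemma outcomeCoord_zero_one (a : Fin 2) : outcomeCoord a 0 1 = (-1) ^ (a : ℕ) := by
  simp [outcomeCoord]

lemma neg_one_pow_mul_I_pow_inj {a a' y y' : Fin 2}
    (h : (-1 : ℂ) ^ (a : ℕ) * I ^ (y : ℕ) = (-1) ^ (a' : ℕ) * I ^ (y' : ℕ)) :
    a = a' ∧ y = y' := by
  rw [← I_sq, ← pow_mul, ← pow_mul, ← pow_add, ← pow_add] at h
  have hexp := Complex.isPrimitiveRoot_I.pow_inj (by omega) (by omega) h
  omega

lemma norm_outcomeCoord (a : Fin 2) {c : ℝ} (hc : |c| < 1) (w : ℂ) :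
    ‖outcomeCoord a c w‖ = ‖w‖ / (1 + (-1) ^ (a : ℕ) * c) := by
  have hden : (1 + (-1) ^ (a : ℕ) * c : ℂ) = ((1 + (-1) ^ (a : ℕ) * c : ℝ) : ℂ) := by push_cast; rfl
  rw [outcomeCoord, hden, norm_div, norm_real,
    Real.norm_of_nonneg (one_add_neg_one_pow_mul_pos hc a).le, norm_mul, norm_pow, norm_neg,
    norm_one, one_pow, one_mul]

lemma neg_one_pow_injective_fin_two : Function.Injective fun b : Fin 2 => (-1 : ℝ) ^ (b : ℕ) :=
  fun b b' h => Fin.ext ((IsPrimitiveRoot.neg_one 0 two_ne_zero.symm).pow_inj b.2 b'.2 h)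

lemma outcomeCoord_mul_inj {r : ℝ} (hr₀ : r ≠ 0) (hr : |r| < 1) {a b y a' b' y' : Fin 2}
    (h : outcomeCoord a 0 1 * outcomeCoord b r (r * I ^ (y : ℕ))
      = outcomeCoord a' 0 1 * outcomeCoord b' r (r * I ^ (y' : ℕ))) :
    (a, b, y) = (a', b', y') := by
  have hr' : (r : ℂ) ≠ 0 := ofReal_ne_zero.mpr hr₀
  have hb : b = b' := by
    have hnorm := congrArg norm h
    simp only [norm_mul, norm_outcomeCoord _ hr, outcomeCoord_zero_one, norm_pow, norm_neg,
      norm_one, norm_I, one_pow, mul_one, one_mul, norm_real] at hnorm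
    rw [div_eq_mul_inv, div_eq_mul_inv, mul_right_inj' (norm_ne_zero_iff.mpr hr₀), _root_.inv_inj,
      add_right_inj, mul_left_inj' hr₀] at hnorm
    exact neg_one_pow_injective_fin_two hnorm
  subst hb
  have hne : (1 + (-1) ^ (b : ℕ) * r : ℂ) ≠ 0 := by
    exact_mod_cast (one_add_neg_one_pow_mul_pos hr b).ne'
  have hphase : (-1 : ℂ) ^ (a : ℕ) * I ^ (y : ℕ) = (-1) ^ (a' : ℕ) * I ^ (y' : ℕ) := by
    have hfactor : (-1 : ℂ) ^ (b : ℕ) * r / (1 + (-1) ^ (b : ℕ) * r) ≠ 0 := by simp [hne, hr']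
    rw [outcomeCoord_zero_one, outcomeCoord_zero_one, outcomeCoord, outcomeCoord] at h
    refine mul_left_cancel₀ hfactor ?_
    linear_combination h
  obtain ⟨rfl, rfl⟩ := neg_one_pow_mul_I_pow_inj hphase
  rfl

lemma abs_inv_sqrt_two_lt_one : |(√2)⁻¹| < 1 := by
  rw [abs_of_pos (by positivity)]
  exact inv_lt_one_of_one_lt₀ (Real.lt_sqrt_of_sq_lt (by norm_num))

lemma XA_zero : XA 0 = blochObs 0 1 := by
  simp [XA, sx, blochObs]

lemma YB_eq (y : Fin 2) :
    YB y = blochObs (√2)⁻¹ (((√2)⁻¹ : ℝ) * I ^ (y : ℕ)) := by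
  fin_cases y <;> ext i j <;> fin_cases i <;> fin_cases j <;>
    simp [YB, sx, sy, sz, blochObs]

/-- The stereographic coordinate of Charlie's conditional state in the generalized GHZ state, for
the outcomes `a` of `σx` and `b` of Bob's setting `y`. -/
def condCoord (θ : ℝ) (a b y : Fin 2) : ℂ :=
  Real.tan θ * star (outcomeCoord a 0 1 * outcomeCoord b (√2)⁻¹ (((√2)⁻¹ : ℝ) * I ^ (y : ℕ)))

lemma condCoord_inj {θ : ℝ} (hcos : Real.cos θ ≠ 0) (hsin : Real.sin θ ≠ 0)
    {a b y a' b' y' : Fin 2} (h : condCoord θ a b y = condCoord θ a' b' y') :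
    (a, b, y) = (a', b', y') := by
  have htan : (Real.tan θ : ℂ) ≠ 0 := by
    rw [Real.tan_eq_sin_div_cos]
    exact ofReal_ne_zero.mpr (div_ne_zero hsin hcos)
  exact outcomeCoord_mul_inj (by positivity) abs_inv_sqrt_two_lt_one
    (star_injective (mul_left_cancel₀ htan h))

lemma exists_condState_XA_YB {θ : ℝ} (hθ : Real.cos θ ≠ 0) (a b y : Fin 2) :
    ∃ k : ℂ, 0 < k ∧ condState (outer (ggHZ θ)) (XA 0) (YB y) a b =
      k • outer (stereoVec (condCoord θ a b y)) := by
  have hr : (((√2)⁻¹ : ℝ) : ℂ) ^ 2 = 1 / 2 := by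
    rw [← ofReal_pow, inv_pow, Real.sq_sqrt zero_le_two]
    norm_num
  have hI : I ^ (y : ℕ) * star (I ^ (y : ℕ)) = 1 := by
    rw [star_pow, ← mul_pow, Complex.star_def, conj_I, mul_neg, I_mul_I, neg_neg, one_pow]
  rw [XA_zero, YB_eq]
  refine exists_condState_ggHZ_blochObs hθ a b (by simp) (by simp) abs_inv_sqrt_two_lt_one ?_
  rw [star_mul', Complex.star_def, conj_ofReal, ← Complex.star_def]
  linear_combination (1 + I ^ (y : ℕ) * star (I ^ (y : ℕ))) * hr + 1 / 2 * hI

lemma normState_condState_XA_YB {θ : ℝ} (hθ : Real.cos θ ≠ 0) (a b y : Fin 2) :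
    normState (condState (outer (ggHZ θ)) (XA 0) (YB y) a b) =
      normState (outer (stereoVec (condCoord θ a b y))) := by
  obtain ⟨k, hk, h⟩ := exists_condState_XA_YB hθ a b y
  rw [h, normState_smul hk.ne']

lemma trace_condState_XA_YB_pos {θ : ℝ} (hθ : Real.cos θ ≠ 0) (a b y : Fin 2) :
    0 < (condState (outer (ggHZ θ)) (XA 0) (YB y) a b).trace := by
  obtain ⟨k, hk, h⟩ := exists_condState_XA_YB hθ a b y
  rw [h, trace_smul, smul_eq_mul]
  exact mul_pos hk (trace_outer_pos (stereoVec_ne_zero _))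

theorem stmt12_general {θ : ℝ} (hcos : Real.cos θ ≠ 0) (hsin : Real.sin θ ≠ 0) :
    (∀ a b y : Fin 2,
      0 < ((condState (outer (ggHZ θ)) (XA 0) (YB y) a b).trace).re ∧
      IsPureState (normState (condState (outer (ggHZ θ)) (XA 0) (YB y) a b))) ∧
    (∀ a b y a' b' y' : Fin 2, (a, b, y) ≠ (a', b', y') →
      normState (condState (outer (ggHZ θ)) (XA 0) (YB y) a b)
        ≠ normState (condState (outer (ggHZ θ)) (XA 0) (YB y') a' b')) := by
  constructor
  · intro a b y
    refine ⟨(Complex.pos_iff.mp (trace_condState_XA_YB_pos hcos a b y)).1, ?_⟩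
    rw [normState_condState_XA_YB hcos]
    exact isPureState_normState_outer (stereoVec_ne_zero _)
  · intro a b y a' b' y' hne heq
    rw [normState_condState_XA_YB hcos, normState_condState_XA_YB hcos] at heq
    exact hne (condCoord_inj hcos hsin (normState_outer_stereoVec_injective heq))

/-- for the GGHZ state and Alice's setting `X₀ = σx`, each of the eight
normalized conditional states on Charlie's qubit (for both of Bob's settings) is a pure state
(rank-one orthogonal projection), and they are pairwise distinct. -/
theorem stmt12 (θ : ℝ) (hθ : 0 < θ) (hθ' : θ < Real.pi / 2) :
    (∀ a b y : Fin 2,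
      0 < ((condState (outer (ggHZ θ)) (XA 0) (YB y) a b).trace).re ∧
      (normState (condState (outer (ggHZ θ)) (XA 0) (YB y) a b)).IsHermitian ∧
      normState (condState (outer (ggHZ θ)) (XA 0) (YB y) a b) *
        normState (condState (outer (ggHZ θ)) (XA 0) (YB y) a b)
        = normState (condState (outer (ggHZ θ)) (XA 0) (YB y) a b) ∧
      (normState (condState (outer (ggHZ θ)) (XA 0) (YB y) a b)).trace = 1) ∧
    (∀ a b y a' b' y' : Fin 2, (a, b, y) ≠ (a', b', y') →
      normState (condState (outer (ggHZ θ)) (XA 0) (YB y) a b)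
        ≠ normState (condState (outer (ggHZ θ)) (XA 0) (YB y') a' b')) :=
  stmt12_general (Real.cos_pos_of_mem_Ioo ⟨by linarith, hθ'⟩).ne'
    (Real.sin_pos_of_pos_of_lt_pi hθ (by linarith)).ne'

end Paper
end
end
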